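/- arXiv:1611.06560 — 2 statements merged into one kernel-verified Lean document; each statement's English description precedes it below -/
import Mathlib

section
/- (Fréchet differentiability.) Let $X$ be a complex Banach space, $LB(X)$ the algebra of bounded linear operators on $X$ with the operator norm $\|\cdot\|$, and let $(\mathcal I,\|\cdot\|_{\mathcal I})$ be an operator ideal in $X$: a two-sided ideal of $LB(X)$, complete with respect to a norm $\|\cdot\|_{\mathcal I}$ such that $\|PSQ\|_{\mathcal I}\le\|P\|\,\|S\|_{\mathcal I}\,\|Q\|$ and $\|S\|\le\|S\|_{\mathcal I}$ for all $P,Q\in LB(X)$, $S\in\mathcal I$ (the case $\mathcal I=LB(X)$ with the operator norm is included). Let $a<b$ be real numbers, let $\tau$ be a finite positive Borel measure on $[a,b]$, and let $f(z)=\int_a^b\frac{z}{t-z}\,d\tau(t)$. Denote by $V_{[a,b]}(X)$ the set of closed densely defined linear operators $A$ in $X$ (in particular, bounded ones) whose resolvent set contains $[a,b]$. For $A\in V_{[a,b]}(X)$ put $R(t,A)=(tI-A)^{-1}$, $m_A=\max_{t\in[a,b]}\|R(t,A)\|$, and $f(A)=\int_a^b A\,R(t,A)\,d\tau(t)$, a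 Bochner integral in the operator norm. Let $A\in V_{[a,b]}(X)$. The integral defining $f(A)$ and, for every $B\in\mathcal I$, the integral $f_A^\nabla(B)=\int_a^b R(t,A)\,B\,R(t,A)\,t\,d\tau(t)$ exist as Bochner integrals, in the operator norm and in the norm of $\mathcal I$ respectively. If $\Delta A\in\mathcal I$ and $\|\Delta A\|_{\mathcal I}\le \frac1{2m_A}$ (for $X=\{0\}$, where $m_A=0$, the right-hand side is read as $0$), then $A+\Delta A$ (with domain $D(A)$) belongs to $V_{[a,b]}(X)$, so that $[a,b]$ is contained in its resolvent set, the operator $f(A+\Delta A)-f(A)$ belongs to $\mathcal I$, and $$\bigl\|f(A+\Delta A)-f(A)-f_A^\nabla(\Delta A)\bigr\|_{\mathcal I}\le 2\,m_A^3\Bigl(\int_a^b |t|\,d\tau(t)\Bigr)\|\Delta A\|_{\mathcal I}^2 .$$ In particular, the $\mathcal I$-valued map $B\mapsto f(A+B)-f(A)$, defined in a neighbourhood of $0$ in $\mathcal I$, is Fréchet differentiable at $B=0$, and its derivative is the bounded linear transformer $f_A^\nabla$ on $\mathcal I$. (If $a\ge 0$, then $\int_a^b|t|\,d\tau(t)=\int_a^b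 t\,d\tau(t)$.) -/
open MeasureTheory Set

namespace ZRCalculus

section ClosedOperators

variable {X : Type*} [NormedAddCommGroup X] [NormedSpace ℂ X]

/-- The bounded everywhere defined operator `R` is a two-sided inverse of `z·I − A`:
it maps `X` into `D(A)`, `(z·I − A) R x = x` for all `x`, and `R (z·I − A) x = x` on `D(A)`. -/
def IsResolventAt (A : X →ₗ.[ℂ] X) (z : ℂ) (R : X →L[ℂ] X) : Prop :=
  (∀ x : X, ∃ h : R x ∈ A.domain, z • R x - A ⟨R x, h⟩ = x) ∧
    ∀ x : A.domain, R (z • (x : X) - A x) = x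

/-- The resolvent set `ρ(A)` of a (possibly unbounded) operator. -/
def opResolventSet (A : X →ₗ.[ℂ] X) : Set ℂ :=
  {z | ∃ R : X →L[ℂ] X, IsResolventAt A z R}

open Classical in
/-- The resolvent `R(z, A) = (z·I − A)⁻¹` for `z ∈ ρ(A)`; it is `0` for `z ∉ ρ(A)`. -/
noncomputable def opResolvent (A : X →ₗ.[ℂ] X) (z : ℂ) : X →L[ℂ] X :=
  if h : z ∈ opResolventSet A then h.choose else 0

theorem isResolventAt_opResolvent {A : X →ₗ.[ℂ] X} {z : ℂ} (hz : z ∈ opResolventSet A) :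
    IsResolventAt A z (opResolvent A z) := by
  rw [opResolvent, dif_pos hz]
  exact hz.choose_spec

theorem opResolvent_mem_domain {A : X →ₗ.[ℂ] X} {z : ℂ} (hz : z ∈ opResolventSet A) (x : X) :
    opResolvent A z x ∈ A.domain :=
  ((isResolventAt_opResolvent hz).1 x).1

theorem apply_opResolvent {A : X →ₗ.[ℂ] X} {z : ℂ} (hz : z ∈ opResolventSet A) (x : X) :
    A ⟨opResolvent A z x, opResolvent_mem_domain hz x⟩ = z • opResolvent A z x - x := by
  obtain ⟨h, hx⟩ := (isResolventAt_opResolvent hz).1 x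
  rw [eq_sub_iff_add_eq, ← eq_sub_iff_add_eq']
  exact hx.symm

open Classical in
/-- The bounded operator `A R(z, A) : x ↦ A (R(z, A) x)` for `z ∈ ρ(A)`; it is `0` for
`z ∉ ρ(A)`. -/
noncomputable def mulResolvent (A : X →ₗ.[ℂ] X) (z : ℂ) : X →L[ℂ] X :=
  if hz : z ∈ opResolventSet A then
    { toLinearMap := A.toFun.comp
        ((opResolvent A z : X →ₗ[ℂ] X).codRestrict A.domain (opResolvent_mem_domain hz))
      cont := by
        have h : Continuous fun x : X => z • opResolvent A z x - x := by fun_prop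
        exact h.congr fun x => (apply_opResolvent hz x).symm }
  else 0

/-- The class `V_{[a,b]}(X)` of closed densely defined operators `A` with `[a,b] ⊆ ρ(A)`. -/
structure MemV (a b : ℝ) (A : X →ₗ.[ℂ] X) : Prop where
  isClosed : A.IsClosed
  dense : Dense (A.domain : Set X)
  mem_opResolventSet : ∀ t ∈ Icc a b, (t : ℂ) ∈ opResolventSet A

/-- `m_A = max_{t ∈ [a,b]} ‖R(t, A)‖`. -/
noncomputable def mConst (a b : ℝ) (A : X →ₗ.[ℂ] X) : ℝ :=
  sSup ((fun t : ℝ => ‖opResolvent A (t : ℂ)‖) '' Icc a b)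

/-- `f(A) = ∫_a^b A R(t, A) dτ(t)`, a Bochner integral in the operator norm, where `τ` is the
representing measure of `f`. -/
noncomputable def fOp (τ : Measure ℝ) (a b : ℝ) (A : X →ₗ.[ℂ] X) : X →L[ℂ] X :=
  ∫ t in Icc a b, mulResolvent A (t : ℂ) ∂τ

/-- The sum `A + B` of an operator `A` and a bounded operator `B`, with domain `D(A)`. -/
def perturb (A : X →ₗ.[ℂ] X) (B : X →L[ℂ] X) : X →ₗ.[ℂ] X :=
  (B : X →ₗ[ℂ] X) +ᵥ A

end ClosedOperators

/-- An operator ideal in `X`: a two-sided ideal of the algebra of bounded operators on `X`,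
complete with respect to a norm `idealNorm` such that `‖P S Q‖_I ≤ ‖P‖ ‖S‖_I ‖Q‖` and
`‖S‖ ≤ ‖S‖_I`. (Definiteness of `idealNorm` follows from the last inequality.) -/
structure OperatorIdeal (X : Type*) [NormedAddCommGroup X] [NormedSpace ℂ X] where
  carrier : Submodule ℂ (X →L[ℂ] X)
  mul_mul_mem : ∀ (P Q : X →L[ℂ] X) {S : X →L[ℂ] X}, S ∈ carrier → P * S * Q ∈ carrier
  idealNorm : Seminorm ℂ carrier
  idealNorm_mul_mul_le : ∀ (P Q : X →L[ℂ] X) (S : carrier),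
    idealNorm ⟨P * S * Q, mul_mul_mem P Q S.2⟩ ≤ ‖P‖ * idealNorm S * ‖Q‖
  opNorm_le : ∀ S : carrier, ‖(S : X →L[ℂ] X)‖ ≤ idealNorm S
  complete : ∀ u : ℕ → carrier,
    (∀ ε > 0, ∃ N, ∀ m ≥ N, ∀ n ≥ N, idealNorm (u m - u n) < ε) →
      ∃ S : carrier, ∀ ε > 0, ∃ N, ∀ n ≥ N, idealNorm (u n - S) < ε

namespace OperatorIdeal

variable {X : Type*} [NormedAddCommGroup X] [NormedSpace ℂ X]

/-- The elements of the ideal, as a Banach space under the ideal norm (not under the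
operator norm). -/
def Elem (I : OperatorIdeal X) : Type _ := I.carrier

/-- An element of the ideal, as a bounded operator. -/
def Elem.val {I : OperatorIdeal X} (S : I.Elem) : X →L[ℂ] X := Subtype.val S

noncomputable instance (I : OperatorIdeal X) : AddCommGroup I.Elem :=
  inferInstanceAs (AddCommGroup I.carrier)

noncomputable instance (I : OperatorIdeal X) : Module ℂ I.Elem :=
  inferInstanceAs (Module ℂ I.carrier)

noncomputable instance (I : OperatorIdeal X) : NormedAddCommGroup I.Elem :=
  AddGroupNorm.toNormedAddCommGroup
    { toFun := fun S : I.Elem => I.idealNorm S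
      map_zero' := map_zero I.idealNorm
      add_le' := map_add_le_add I.idealNorm
      neg' := map_neg_eq_map I.idealNorm
      eq_zero_of_map_eq_zero' := fun S hS => Subtype.ext
        (norm_le_zero_iff.1 ((I.opNorm_le S).trans_eq hS)) }

noncomputable instance (I : OperatorIdeal X) : NormedSpace ℂ I.Elem where
  norm_smul_le c S := (map_smul_eq_mul I.idealNorm c S).le

instance (I : OperatorIdeal X) : CompleteSpace I.Elem :=
  Metric.complete_of_cauchySeq_tendsto fun u hu => by
    obtain ⟨S, hS⟩ := I.complete u fun ε hε => by
      obtain ⟨N, hN⟩ := Metric.cauchySeq_iff.1 hu ε hε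
      exact ⟨N, fun m hm n hn => (dist_eq_norm (u m) (u n)).symm.trans_lt (hN m hm n hn)⟩
    refine ⟨S, Metric.tendsto_atTop.2 fun ε hε => ?_⟩
    obtain ⟨N, hN⟩ := hS ε hε
    exact ⟨N, fun n hn => (dist_eq_norm (E := I.Elem) (u n) S).trans_lt (hN n hn)⟩

/-- The product `P S Q`, as an element of the ideal. -/
def sandwich (I : OperatorIdeal X) (P : X →L[ℂ] X) (S : I.Elem) (Q : X →L[ℂ] X) : I.Elem :=
  ⟨P * S.val * Q, I.mul_mul_mem P Q S.2⟩

end OperatorIdeal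

section Transformer

variable {X : Type*} [NormedAddCommGroup X] [NormedSpace ℂ X]

/-- The integrand `R(t, A) B R(t, A) t` of the transformer, with values in the ideal. -/
noncomputable def fDerIntegrand (I : OperatorIdeal X) (A : X →ₗ.[ℂ] X) (B : I.Elem)
    (t : ℝ) : I.Elem :=
  (t : ℂ) • I.sandwich (opResolvent A (t : ℂ)) B (opResolvent A (t : ℂ))

/-- The transformer `B ↦ ∫_a^b R(t, A) B R(t, A) t dτ(t)` on the ideal, a Bochner integral in
the ideal norm. -/
noncomputable def fDer (I : OperatorIdeal X) (τ : Measure ℝ) (a b : ℝ) (A : X →ₗ.[ℂ] X)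
    (B : I.Elem) : I.Elem :=
  ∫ t in Icc a b, fDerIntegrand I A B t ∂τ

open Classical in
/-- The increment `f(A + B) − f(A)`, as an element of the ideal when it belongs to the ideal
(and `0` otherwise). -/
noncomputable def fIncrement (I : OperatorIdeal X) (τ : Measure ℝ) (a b : ℝ)
    (A : X →ₗ.[ℂ] X) (B : I.Elem) : I.Elem :=
  if h : fOp τ a b (perturb A B.val) - fOp τ a b A ∈ I.carrier then ⟨_, h⟩ else 0

end Transformer

end ZRCalculus

open ZRCalculus

/-!
For real `t`, `A R(t, A) = t R(t, A) - 1`, so the second resolvent identity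
`R(t, A + B) - R(t, A) = R(t, A + B) B R(t, A)` gives `f(A + B) - f(A) = D(A + B, A) B`, where
`D(A₁, A₂) B = ∫ t R(t, A₁) B R(t, A₂) dτ(t)` is an operator version of the divided difference
`f[z, w] = ∫ t / ((t - z) (t - w)) dτ(t)`. The derivative at `A` is `D(A, A)`. The remainder
`(D(A + B, A) - D(A, A)) B` is quadratic in `B`, because the second resolvent identity applies once
more to the left factor `R(t, A + B) - R(t, A)`.
-/

namespace ZRCalculus

section Resolvent

variable {X : Type*} [NormedAddCommGroup X] [NormedSpace ℂ X] {A : X →ₗ.[ℂ] X} {z w : ℂ}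
  {B R S : X →L[ℂ] X}

theorem IsResolventAt.unique (hR : IsResolventAt A z R) (hS : IsResolventAt A z S) : R = S := by
  ext x
  obtain ⟨hSx, hx⟩ := hS.1 x
  simpa only [hx] using hR.2 ⟨S x, hSx⟩

theorem IsResolventAt.opResolvent_eq (hR : IsResolventAt A z R) : opResolvent A z = R :=
  (isResolventAt_opResolvent ⟨R, hR⟩).unique hR

theorem mulResolvent_eq (hz : z ∈ opResolventSet A) :
    mulResolvent A z = z • opResolvent A z - 1 := by
  ext x
  rw [mulResolvent, dif_pos hz]
  exact apply_opResolvent hz x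

theorem smul_sub_perturb_apply (A : X →ₗ.[ℂ] X) (B : X →L[ℂ] X) (z : ℂ) (x : A.domain) :
    z • (x : X) - perturb A B x = (z • (x : X) - A x) - B x := by
  change z • (x : X) - (B x + A x) = _
  abel

theorem isClosed_perturb (hA : A.IsClosed) (B : X →L[ℂ] X) : (perturb A B).IsClosed := by
  have hgraph : ((perturb A B).graph : Set (X × X)) =
      (fun p : X × X => (p.1, p.2 - B p.1)) ⁻¹' A.graph := by
    ext ⟨x, y⟩
    simp only [mem_preimage, SetLike.mem_coe, LinearPMap.mem_graph_iff, eq_sub_iff_add_eq']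
    constructor <;> rintro ⟨v, rfl, hv⟩ <;> exact ⟨v, rfl, hv⟩
  rw [LinearPMap.IsClosed, hgraph]
  exact IsClosed.preimage (by fun_prop) hA

/-- The factorization behind this is `z - (A + B) = (1 - B R) (z - A)`. -/
theorem isResolventAt_perturb (hR : IsResolventAt A z R) (hu : IsUnit (1 - B * R)) :
    IsResolventAt (perturb A B) z (R * Ring.inverse (1 - B * R)) := by
  set U := Ring.inverse (1 - B * R)
  have right_inv (x : X) : U x - B (R (U x)) = x :=
    DFunLike.congr_fun (Ring.mul_inverse_cancel _ hu) x
  have left_inv (x : X) : U (x - B (R x)) = x :=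
    DFunLike.congr_fun (Ring.inverse_mul_cancel _ hu) x
  refine ⟨fun x => ?_, fun x => ?_⟩
  · obtain ⟨hmem, hx⟩ := hR.1 (U x)
    refine ⟨hmem, ?_⟩
    calc z • R (U x) - perturb A B ⟨R (U x), hmem⟩
        = (z • R (U x) - A ⟨R (U x), hmem⟩) - B (R (U x)) :=
          smul_sub_perturb_apply A B z ⟨R (U x), hmem⟩
      _ = x := by rw [hx, right_inv]
  · have hx : R (z • (x : X) - A x) = x := hR.2 x
    calc R (U (z • (x : X) - perturb A B x))
        = R (U ((z • (x : X) - A x) - B (R (z • (x : X) - A x)))) := by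
          rw [smul_sub_perturb_apply A B z x, hx]
      _ = x := by rw [left_inv, hx]

theorem isResolventAt_perturb_smul_one_iff :
    IsResolventAt (perturb A ((z - w) • 1)) z R ↔ IsResolventAt A w R := by
  have shift (x : A.domain) :
      z • (x : X) - perturb A ((z - w) • 1) x = w • (x : X) - A x := by
    rw [smul_sub_perturb_apply A _ z x, smul_apply, one_apply_eq_self, sub_smul]
    abel
  exact and_congr
    (forall_congr' fun x => exists_congr fun hmem => by rw [← shift ⟨R x, hmem⟩]; rfl)
    (forall_congr' fun x => by rw [← shift x])

theorem IsResolventAt.perturb_sub_eq (hR : IsResolventAt A z R)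
    (hS : IsResolventAt (perturb A B) z S) : S - R = S * B * R := by
  ext x
  obtain ⟨hmem, hx⟩ := hR.1 x
  have hperturb : z • R x - perturb A B ⟨R x, hmem⟩ = x - B (R x) :=
    (smul_sub_perturb_apply A B z ⟨R x, hmem⟩).trans (congrArg (· - B (R x)) hx)
  have hSx : S (x - B (R x)) = R x := (congrArg S hperturb).symm.trans (hS.2 ⟨R x, hmem⟩)
  rw [map_sub, sub_eq_iff_eq_add] at hSx
  exact sub_eq_iff_eq_add'.2 hSx

theorem opResolvent_perturb_sub (hz : z ∈ opResolventSet A)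
    (hz' : z ∈ opResolventSet (perturb A B)) :
    opResolvent (perturb A B) z - opResolvent A z =
      opResolvent (perturb A B) z * B * opResolvent A z :=
  (isResolventAt_opResolvent hz).perturb_sub_eq (isResolventAt_opResolvent hz')

theorem norm_opResolvent_perturb_mul_le (hz : z ∈ opResolventSet A)
    (hz' : z ∈ opResolventSet (perturb A B)) :
    ‖opResolvent (perturb A B) z‖ * (1 - ‖B‖ * ‖opResolvent A z‖) ≤ ‖opResolvent A z‖ := by
  have hid := opResolvent_perturb_sub hz hz'
  set R := opResolvent A z
  set S := opResolvent (perturb A B) z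
  have hS : ‖S‖ ≤ ‖R‖ + ‖S‖ * ‖B‖ * ‖R‖ :=
    calc ‖S‖ ≤ ‖R‖ + ‖S - R‖ := norm_le_norm_add_norm_sub' S R
      _ ≤ ‖R‖ + ‖S‖ * ‖B‖ * ‖R‖ := by rw [hid]; gcongr; exact norm_mul₃_le
  linarith

variable [CompleteSpace X]

theorem mem_opResolventSet_perturb (hz : z ∈ opResolventSet A)
    (hB : ‖B‖ * ‖opResolvent A z‖ < 1) : z ∈ opResolventSet (perturb A B) :=
  ⟨_, isResolventAt_perturb (isResolventAt_opResolvent hz)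
    (isUnit_one_sub_of_norm_lt_one ((norm_mul_le _ _).trans_lt hB))⟩

theorem continuousAt_opResolvent (hz : z ∈ opResolventSet A) :
    ContinuousAt (opResolvent A) z := by
  set R := opResolvent A z
  let U : ℂ → X →L[ℂ] X := fun w => 1 - (z - w) • 1 * R
  have hU : Continuous U := by fun_prop
  have hUz : U z = 1 := by simp [U]
  have hunit : ∀ᶠ w in nhds z, IsUnit (U w) :=
    hU.continuousAt.eventually_mem (Units.isOpen.mem_nhds (hUz ▸ isUnit_one))
  have heq : (fun w => R * Ring.inverse (U w)) =ᶠ[nhds z] opResolvent A := by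
    filter_upwards [hunit] with w hw
    exact (isResolventAt_perturb_smul_one_iff.1
      (isResolventAt_perturb (isResolventAt_opResolvent hz) hw)).opResolvent_eq.symm
  have hinv : ContinuousAt Ring.inverse (U z) := hUz ▸ NormedRing.inverse_continuousAt 1
  exact (continuousAt_const.mul (hinv.comp hU.continuousAt)).congr heq

end Resolvent

section MemV

variable {X : Type*} [NormedAddCommGroup X] [NormedSpace ℂ X] {A : X →ₗ.[ℂ] X} {a b : ℝ}

theorem mConst_nonneg (a b : ℝ) (A : X →ₗ.[ℂ] X) : 0 ≤ mConst a b A :=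
  Real.sSup_nonneg (forall_mem_image.2 fun _ _ => norm_nonneg _)

variable [CompleteSpace X] {B : X →L[ℂ] X} {t : ℝ}

theorem MemV.continuousOn_opResolvent (hA : MemV a b A) :
    ContinuousOn (fun t : ℝ => opResolvent A (t : ℂ)) (Icc a b) := fun t ht =>
  ((continuousAt_opResolvent (hA.mem_opResolventSet t ht)).comp
    (f := Complex.ofReal) Complex.continuous_ofReal.continuousAt).continuousWithinAt

theorem MemV.norm_opResolvent_le (hA : MemV a b A) (ht : t ∈ Icc a b) :
    ‖opResolvent A (t : ℂ)‖ ≤ mConst a b A :=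
  le_csSup (isCompact_Icc.image_of_continuousOn hA.continuousOn_opResolvent.norm).bddAbove
    (mem_image_of_mem _ ht)

theorem MemV.norm_mul_norm_opResolvent_le (hA : MemV a b A) (B : X →L[ℂ] X) (ht : t ∈ Icc a b) :
    ‖B‖ * ‖opResolvent A (t : ℂ)‖ ≤ ‖B‖ * mConst a b A := by
  gcongr
  exact hA.norm_opResolvent_le ht

theorem memV_perturb (hA : MemV a b A) (hB : ‖B‖ * mConst a b A < 1) :
    MemV a b (perturb A B) where
  isClosed := isClosed_perturb hA.isClosed B
  dense := hA.dense
  mem_opResolventSet t ht := mem_opResolventSet_perturb (hA.mem_opResolventSet t ht)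
    ((hA.norm_mul_norm_opResolvent_le B ht).trans_lt hB)

theorem MemV.norm_opResolvent_perturb_le (hA : MemV a b A) (hB : ‖B‖ * mConst a b A ≤ 1 / 2)
    (ht : t ∈ Icc a b) : ‖opResolvent (perturb A B) (t : ℂ)‖ ≤ 2 * mConst a b A := by
  have hA' := memV_perturb hA (hB.trans_lt one_half_lt_one)
  have hBR : 1 / 2 ≤ 1 - ‖B‖ * ‖opResolvent A (t : ℂ)‖ := by
    linarith [hA.norm_mul_norm_opResolvent_le B ht]
  have hS : ‖opResolvent (perturb A B) (t : ℂ)‖ * (1 / 2) ≤ mConst a b A :=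
    calc ‖opResolvent (perturb A B) (t : ℂ)‖ * (1 / 2)
        ≤ ‖opResolvent (perturb A B) (t : ℂ)‖ * (1 - ‖B‖ * ‖opResolvent A (t : ℂ)‖) := by gcongr
      _ ≤ ‖opResolvent A (t : ℂ)‖ := norm_opResolvent_perturb_mul_le
          (hA.mem_opResolventSet t ht) (hA'.mem_opResolventSet t ht)
      _ ≤ mConst a b A := hA.norm_opResolvent_le ht
  linarith

theorem MemV.norm_opResolvent_perturb_sub_le (hA : MemV a b A)
    (hB : ‖B‖ * mConst a b A ≤ 1 / 2) (ht : t ∈ Icc a b) :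
    ‖opResolvent (perturb A B) (t : ℂ) - opResolvent A (t : ℂ)‖ ≤
      2 * mConst a b A ^ 2 * ‖B‖ := by
  have hA' := memV_perturb hA (hB.trans_lt one_half_lt_one)
  have hm := mConst_nonneg a b A
  rw [opResolvent_perturb_sub (hA.mem_opResolventSet t ht) (hA'.mem_opResolventSet t ht)]
  calc ‖opResolvent (perturb A B) (t : ℂ) * B * opResolvent A (t : ℂ)‖
      ≤ ‖opResolvent (perturb A B) (t : ℂ)‖ * ‖B‖ * ‖opResolvent A (t : ℂ)‖ := norm_mul₃_le
    _ ≤ 2 * mConst a b A * ‖B‖ * mConst a b A := by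
        gcongr
        exacts [hA.norm_opResolvent_perturb_le hB ht, hA.norm_opResolvent_le ht]
    _ = 2 * mConst a b A ^ 2 * ‖B‖ := by ring

theorem MemV.integrableOn_mulResolvent (hA : MemV a b A) (τ : Measure ℝ)
    [IsFiniteMeasureOnCompacts τ] :
    IntegrableOn (fun t : ℝ => mulResolvent A (t : ℂ)) (Icc a b) τ := by
  have hcont : ContinuousOn (fun t : ℝ => (t : ℂ) • opResolvent A (t : ℂ) - 1) (Icc a b) :=
    (Complex.continuous_ofReal.continuousOn.smul hA.continuousOn_opResolvent).sub
      continuousOn_const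
  exact (hcont.congr fun t ht => mulResolvent_eq (hA.mem_opResolventSet t ht)).integrableOn_compact
    isCompact_Icc

end MemV

namespace OperatorIdeal

variable {X : Type*} [NormedAddCommGroup X] [NormedSpace ℂ X] (I : OperatorIdeal X)

theorem Elem.val_injective : Function.Injective (Elem.val (I := I)) := Subtype.val_injective

theorem Elem.norm_val_le {I : OperatorIdeal X} (S : I.Elem) : ‖S.val‖ ≤ ‖S‖ := I.opNorm_le S

/-- The inclusion of an operator ideal into the bounded operators, as a continuous linear map; it
carries integrals in the ideal norm to integrals in the operator norm. -/
noncomputable def valCLM : I.Elem →L[ℂ] (X →L[ℂ] X) :=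
  LinearMap.mkContinuous
    { toFun := Elem.val
      map_add' := fun _ _ => rfl
      map_smul' := fun _ _ => rfl } 1
    fun S => S.norm_val_le.trans_eq (one_mul _).symm

/-- The two-sided multiplication `S ↦ P S Q`, as a bounded operator on the ideal. -/
noncomputable def sandwichCLM (P Q : X →L[ℂ] X) : I.Elem →L[ℂ] I.Elem :=
  LinearMap.mkContinuous
    { toFun := fun S => I.sandwich P S Q
      map_add' := fun S T => Elem.val_injective I <| by
        change P * (S.val + T.val) * Q = P * S.val * Q + P * T.val * Q
        rw [mul_add, add_mul]
      map_smul' := fun c S => Elem.val_injective I <| by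
        change P * (c • S.val) * Q = c • (P * S.val * Q)
        rw [mul_smul_comm, smul_mul_assoc] }
    (‖P‖ * ‖Q‖) fun S => (I.idealNorm_mul_mul_le P Q S).trans_eq (mul_right_comm _ _ _)

theorem norm_sandwichCLM_le (P Q : X →L[ℂ] X) : ‖I.sandwichCLM P Q‖ ≤ ‖P‖ * ‖Q‖ :=
  LinearMap.mkContinuous_norm_le _ (by positivity) _

theorem isBoundedBilinearMap_sandwichCLM :
    IsBoundedBilinearMap ℂ fun p : (X →L[ℂ] X) × (X →L[ℂ] X) => I.sandwichCLM p.1 p.2 where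
  add_left P P' Q := ContinuousLinearMap.ext fun S => Elem.val_injective I <| by
    change (P + P') * S.val * Q = P * S.val * Q + P' * S.val * Q
    rw [add_mul, add_mul]
  smul_left c P Q := ContinuousLinearMap.ext fun S => Elem.val_injective I <| by
    change c • P * S.val * Q = c • (P * S.val * Q)
    rw [smul_mul_assoc, smul_mul_assoc]
  add_right P Q Q' := ContinuousLinearMap.ext fun S => Elem.val_injective I <| by
    change P * S.val * (Q + Q') = P * S.val * Q + P * S.val * Q'
    rw [mul_add]
  smul_right c P Q := ContinuousLinearMap.ext fun S => Elem.val_injective I <| by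
    change P * S.val * (c • Q) = c • (P * S.val * Q)
    rw [mul_smul_comm]
  bound := ⟨1, one_pos, fun P Q => (I.norm_sandwichCLM_le P Q).trans_eq (by rw [one_mul])⟩

end OperatorIdeal

theorem norm_setIntegral_ofReal_smul_le {E : Type*} [NormedAddCommGroup E] [NormedSpace ℂ E]
    {τ : Measure ℝ} [IsFiniteMeasureOnCompacts τ] {a b C : ℝ} {g : ℝ → E}
    (hg : ∀ t ∈ Icc a b, ‖g t‖ ≤ C) :
    ‖∫ t in Icc a b, (t : ℂ) • g t ∂τ‖ ≤ (∫ t in Icc a b, |t| ∂τ) * C := by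
  have habs : IntegrableOn (fun t : ℝ => |t|) (Icc a b) τ :=
    continuous_abs.continuousOn.integrableOn_compact isCompact_Icc
  rw [← integral_mul_const]
  refine norm_integral_le_of_norm_le (Integrable.mul_const habs C)
    (ae_restrict_of_forall_mem measurableSet_Icc fun t ht => ?_)
  rw [norm_smul, Complex.norm_real, Real.norm_eq_abs]
  gcongr
  exact hg t ht

section DividedDifference

variable {X : Type*} [NormedAddCommGroup X] [NormedSpace ℂ X] {A A₁ A₂ A₃ : X →ₗ.[ℂ] X}
  {a b : ℝ}

/-- The transformer `B ↦ ∫_a^b R(t, A₁) B R(t, A₂) t dτ(t)` on the ideal, the operator analogue of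
the divided difference of `f`. The integral is taken in the Banach space of bounded operators on
the ideal, so that boundedness and linearity are built in. -/
noncomputable def dividedDifference (I : OperatorIdeal X) (τ : Measure ℝ) (a b : ℝ)
    (A₁ A₂ : X →ₗ.[ℂ] X) : I.Elem →L[ℂ] I.Elem :=
  ∫ t in Icc a b,
    (t : ℂ) • I.sandwichCLM (opResolvent A₁ (t : ℂ)) (opResolvent A₂ (t : ℂ)) ∂τ

variable [CompleteSpace X] (I : OperatorIdeal X) (τ : Measure ℝ) [IsFiniteMeasureOnCompacts τ]

theorem MemV.integrableOn_smul_sandwichCLM (h₁ : MemV a b A₁) (h₂ : MemV a b A₂) :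
    IntegrableOn (fun t : ℝ =>
      (t : ℂ) • I.sandwichCLM (opResolvent A₁ (t : ℂ)) (opResolvent A₂ (t : ℂ))) (Icc a b) τ :=
  (Complex.continuous_ofReal.continuousOn.smul
    (I.isBoundedBilinearMap_sandwichCLM.continuous.comp_continuousOn
      (h₁.continuousOn_opResolvent.prodMk h₂.continuousOn_opResolvent))).integrableOn_compact
    isCompact_Icc

theorem MemV.integrableOn_fDerIntegrand (hA : MemV a b A) (B : I.Elem) :
    IntegrableOn (fDerIntegrand I A B) (Icc a b) τ :=
  (hA.integrableOn_smul_sandwichCLM I τ hA).apply_continuousLinearMap B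

theorem MemV.dividedDifference_apply (h₁ : MemV a b A₁) (h₂ : MemV a b A₂) (B : I.Elem) :
    dividedDifference I τ a b A₁ A₂ B = ∫ t in Icc a b,
      (t : ℂ) • I.sandwich (opResolvent A₁ (t : ℂ)) B (opResolvent A₂ (t : ℂ)) ∂τ :=
  ContinuousLinearMap.integral_apply (h₁.integrableOn_smul_sandwichCLM I τ h₂) B

theorem MemV.dividedDifference_self_apply (hA : MemV a b A) (B : I.Elem) :
    dividedDifference I τ a b A A B = fDer I τ a b A B :=
  hA.dividedDifference_apply I τ hA B

theorem MemV.val_dividedDifference_apply (h₁ : MemV a b A₁) (h₂ : MemV a b A₂) (B : I.Elem) :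
    (dividedDifference I τ a b A₁ A₂ B).val = ∫ t in Icc a b,
      (t : ℂ) • (opResolvent A₁ (t : ℂ) * B.val * opResolvent A₂ (t : ℂ)) ∂τ := by
  rw [h₁.dividedDifference_apply I τ h₂]
  exact (I.valCLM.integral_comp_comm
    ((h₁.integrableOn_smul_sandwichCLM I τ h₂).apply_continuousLinearMap B)).symm

theorem MemV.norm_dividedDifference_sub_le (h₁ : MemV a b A₁) (h₂ : MemV a b A₂)
    (h₃ : MemV a b A₃) {C : ℝ}
    (hC : ∀ t ∈ Icc a b, ‖opResolvent A₁ (t : ℂ) - opResolvent A₂ (t : ℂ)‖ ≤ C) :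
    ‖dividedDifference I τ a b A₁ A₃ - dividedDifference I τ a b A₂ A₃‖ ≤
      (∫ t in Icc a b, |t| ∂τ) * (C * mConst a b A₃) := by
  rw [dividedDifference, dividedDifference, ← integral_sub
    (h₁.integrableOn_smul_sandwichCLM I τ h₃) (h₂.integrableOn_smul_sandwichCLM I τ h₃)]
  simp only [← smul_sub, ← I.isBoundedBilinearMap_sandwichCLM.map_sub_left]
  refine norm_setIntegral_ofReal_smul_le fun t ht => (I.norm_sandwichCLM_le _ _).trans ?_
  exact mul_le_mul (hC t ht) (h₃.norm_opResolvent_le ht) (norm_nonneg _)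
    ((norm_nonneg _).trans (hC t ht))

theorem MemV.fOp_perturb_sub_fOp {B : I.Elem} (hA : MemV a b A)
    (hA' : MemV a b (perturb A B.val)) :
    fOp τ a b (perturb A B.val) - fOp τ a b A =
      (dividedDifference I τ a b (perturb A B.val) A B).val := by
  rw [hA'.val_dividedDifference_apply I τ hA, fOp, fOp,
    ← integral_sub (hA'.integrableOn_mulResolvent τ) (hA.integrableOn_mulResolvent τ)]
  refine setIntegral_congr_fun measurableSet_Icc fun t ht => ?_
  have hz := hA.mem_opResolventSet t ht
  have hz' := hA'.mem_opResolventSet t ht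
  simp only [mulResolvent_eq hz, mulResolvent_eq hz', sub_sub_sub_cancel_right, ← smul_sub,
    opResolvent_perturb_sub hz hz']

theorem MemV.fOp_perturb_sub_fOp_mem {B : I.Elem} (hA : MemV a b A)
    (hA' : MemV a b (perturb A B.val)) :
    fOp τ a b (perturb A B.val) - fOp τ a b A ∈ I.carrier := by
  rw [hA.fOp_perturb_sub_fOp I τ hA']
  exact Subtype.property _

theorem MemV.fIncrement_eq_dividedDifference {B : I.Elem} (hA : MemV a b A)
    (hA' : MemV a b (perturb A B.val)) :
    fIncrement I τ a b A B = dividedDifference I τ a b (perturb A B.val) A B := by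
  have hval : (fIncrement I τ a b A B).val = fOp τ a b (perturb A B.val) - fOp τ a b A :=
    congrArg Subtype.val (dif_pos (hA.fOp_perturb_sub_fOp_mem I τ hA'))
  exact OperatorIdeal.Elem.val_injective I (hval.trans (hA.fOp_perturb_sub_fOp I τ hA'))

theorem MemV.norm_fIncrement_sub_fDer_le (hA : MemV a b A) {B : I.Elem}
    (hB : ‖B.val‖ * mConst a b A ≤ 1 / 2) :
    ‖fIncrement I τ a b A B - fDer I τ a b A B‖ ≤
      2 * mConst a b A ^ 3 * (∫ t in Icc a b, |t| ∂τ) * ‖B‖ ^ 2 := by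
  have hA' := memV_perturb hA (hB.trans_lt one_half_lt_one)
  have hm := mConst_nonneg a b A
  rw [hA.fIncrement_eq_dividedDifference I τ hA', ← hA.dividedDifference_self_apply I τ,
    ← sub_apply]
  calc ‖(dividedDifference I τ a b (perturb A B.val) A - dividedDifference I τ a b A A) B‖
      ≤ (∫ t in Icc a b, |t| ∂τ) * (2 * mConst a b A ^ 2 * ‖B.val‖ * mConst a b A) * ‖B‖ :=
        ContinuousLinearMap.le_of_opNorm_le _ (hA'.norm_dividedDifference_sub_le I τ hA hA
          fun t ht => hA.norm_opResolvent_perturb_sub_le hB ht) B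
    _ ≤ (∫ t in Icc a b, |t| ∂τ) * (2 * mConst a b A ^ 2 * ‖B‖ * mConst a b A) * ‖B‖ := by
        gcongr
        exact B.norm_val_le
    _ = 2 * mConst a b A ^ 3 * (∫ t in Icc a b, |t| ∂τ) * ‖B‖ ^ 2 := by ring

theorem MemV.hasFDerivAt_fIncrement (hA : MemV a b A) :
    HasFDerivAt (fIncrement I τ a b A) (dividedDifference I τ a b A A) 0 := by
  have hsmall : ∀ᶠ B : I.Elem in nhds 0, ‖B.val‖ * mConst a b A < 1 / 2 := by
    have hcont : Continuous fun B : I.Elem => ‖B.val‖ * mConst a b A :=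
      I.valCLM.continuous.norm.mul_const _
    refine hcont.continuousAt.eventually_lt_const ?_
    simp [show (0 : I.Elem).val = 0 from rfl]
  have hremainder : (fun B => fIncrement I τ a b A B - dividedDifference I τ a b A A B)
      =O[nhds 0] fun B : I.Elem => ‖B - 0‖ ^ 2 := by
    refine .of_bound (2 * mConst a b A ^ 3 * ∫ t in Icc a b, |t| ∂τ) ?_
    filter_upwards [hsmall] with B hB
    simpa [hA.dividedDifference_self_apply I τ] using
      hA.norm_fIncrement_sub_fDer_le I τ hB.le
  simpa using (hremainder.hasFDerivAt one_lt_two).fun_add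
    (dividedDifference I τ a b A A).hasFDerivAt

end DividedDifference

end ZRCalculus

theorem fOp_frechet_differentiable {X : Type*} [NormedAddCommGroup X] [NormedSpace ℂ X]
    [CompleteSpace X] (I : OperatorIdeal X) (a b : ℝ) (hab : a < b)
    (τ : Measure ℝ) [IsFiniteMeasure τ] (A : X →ₗ.[ℂ] X) (hA : MemV a b A) :
    -- the integrals defining `f(A)` and the transformer exist as Bochner integrals
    IntegrableOn (fun t : ℝ => mulResolvent A (t : ℂ)) (Icc a b) τ ∧
    (∀ B : I.Elem, IntegrableOn (fDerIntegrand I A B) (Icc a b) τ) ∧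
    -- the quantitative estimate
    (∀ ΔA : I.Elem, ‖ΔA‖ ≤ 1 / (2 * mConst a b A) →
      MemV a b (perturb A ΔA.val) ∧
      fOp τ a b (perturb A ΔA.val) - fOp τ a b A ∈ I.carrier ∧
      ‖fIncrement I τ a b A ΔA - fDer I τ a b A ΔA‖ ≤
        2 * mConst a b A ^ 3 * (∫ t in Icc a b, |t| ∂τ) * ‖ΔA‖ ^ 2) ∧
    -- Fréchet differentiability, with the transformer as derivative
    ∃ T : I.Elem →L[ℂ] I.Elem,
      (∀ B : I.Elem, T B = fDer I τ a b A B) ∧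
      HasFDerivAt (fIncrement I τ a b A) T 0 := by
  refine ⟨hA.integrableOn_mulResolvent τ, hA.integrableOn_fDerIntegrand I τ, fun ΔA hΔA => ?_,
    dividedDifference I τ a b A A, hA.dividedDifference_self_apply I τ,
    hA.hasFDerivAt_fIncrement I τ⟩
  have hm := mConst_nonneg a b A
  have hsmall : ‖ΔA.val‖ * mConst a b A ≤ 1 / 2 :=
    calc ‖ΔA.val‖ * mConst a b A
        ≤ 1 / (2 * mConst a b A) * mConst a b A := by gcongr; exact ΔA.norm_val_le.trans hΔA
      _ = 1 / 2 * (mConst a b A / mConst a b A) := by ring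
      _ ≤ 1 / 2 := mul_le_of_le_one_right one_half_pos.le (div_self_le_one _)
  have hA' := memV_perturb hA (hsmall.trans_lt one_half_lt_one)
  exact ⟨hA', hA.fOp_perturb_sub_fOp_mem I τ hA', hA.norm_fIncrement_sub_fDer_le I τ hsmall⟩
end

section
/- (Analyticity in the perturbation parameter.) Let $X$ be a complex Banach space, let $LB(X)$ be the algebra of bounded linear operators on $X$ with the operator norm $\|\cdot\|$, and let $a<b$ be real numbers. Let $(\mathcal I,\|\cdot\|_{\mathcal I})$ be an operator ideal in $X$, i.e. a two-sided ideal of $LB(X)$, complete in a norm $\|\cdot\|_{\mathcal I}$ with $\|PSQ\|_{\mathcal I}\le\|P\|\,\|S\|_{\mathcal I}\,\|Q\|$ and $\|S\|\le\|S\|_{\mathcal I}$ for all $P,Q\in LB(X)$, $S\in\mathcal I$ (for instance $\mathcal I=LB(X)$). Let $V_{[a,b]}(X)$ be the set of all closed densely defined operators $A$ in $X$ (for instance bounded ones) whose resolvent set contains $[a,b]$; for such $A$ write $R(t,A)=(tI-A)^{-1}$, $m_A=\max_{t\in[a,b]}\|R(t,A)\|$ and $\delta_A=1/m_A$. Let $\tau$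 be a finite positive Borel measure on $[a,b]$, let $f(z)=\int_a^b\frac{z}{t-z}\,d\tau(t)$ be the associated function of the class $ZR[a,b]$, and for $A\in V_{[a,b]}(X)$ put $f(A)=\int_a^b A\,R(t,A)\,d\tau(t)$, a Bochner integral in operator norm. Let $A\in V_{[a,b]}(X)$ and let $B\in\mathcal I$, $B\neq0$. For every $z\in\mathbb C$ with $|z|<\delta_A/\|B\|$, the operator $A+zB$ (with domain $D(A)$) belongs to $V_{[a,b]}(X)$, the integrals defining $f(A)$ and $f(A+zB)$ exist, $f(A+zB)-f(A)\in\mathcal I$, and $$f(A+zB)-f(A)=\sum_{n=1}^\infty z^nC_n,$$ where the series converges absolutely in the norm $\|\cdot\|_{\mathcal I}$ and, for $n\ge1$, $$C_n=\frac1{n!}\left.\frac{d^n}{dz^n}\bigl(f(A+zB)-f(A)\bigr)\right|_{z=0}=\int_a^b(R(t,A)B)^nR(t,A)\,t\,d\tau(t)\in\mathcal I$$ (the derivatives are taken in the norm $\|\cdot\|_{\mathcal I}$; the integral is a Bochner integral in operator norm, and it exists). Moreover, for all $n\ge1$, $$\|C_n\|\le m_A^{n+1}\|B\|^n\int_a^b|t|\,d\tau(t),\qquad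 \|C_n\|_{\mathcal I}\le m_A^{n+1}\|B\|^{n-1}\|B\|_{\mathcal I}\int_a^b|t|\,d\tau(t),$$ and the $\mathcal I$-valued function $z\mapsto f(A+zB)-f(A)$ is analytic on the disk $|z|<\delta_A/\|B\|$. -/
open MeasureTheory Set Filter Topology

section Resolvent

variable {X : Type*} [NormedAddCommGroup X] [NormedSpace ℂ X]

/-- The bounded operator `R` is a two-sided inverse of `l·I - A : D(A) → X`, where `A` is a
(possibly unbounded) linear operator in `X` with domain `A.domain`. -/
structure IsResolventAt (A : X →ₗ.[ℂ] X) (l : ℂ) (R : X →L[ℂ] X) : Prop where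
  mem_domain : ∀ x, R x ∈ A.domain
  right_inv : ∀ x, l • R x - A ⟨R x, mem_domain x⟩ = x
  left_inv : ∀ y : A.domain, R (l • (y : X) - A y) = y

/-- The resolvent set `ρ(A)`. -/
def opResolventSet (A : X →ₗ.[ℂ] X) : Set ℂ :=
  {l | ∃ R : X →L[ℂ] X, IsResolventAt A l R}

open Classical in
/-- The resolvent `R(l, A) = (l·I - A)⁻¹` (and `0` for `l ∉ ρ(A)`). -/
noncomputable def opResolvent (A : X →ₗ.[ℂ] X) (l : ℂ) : X →L[ℂ] X :=
  if h : l ∈ opResolventSet A then Classical.choose h else 0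

theorem isResolventAt_opResolvent {A : X →ₗ.[ℂ] X} {l : ℂ} (h : l ∈ opResolventSet A) :
    IsResolventAt A l (opResolvent A l) := by
  unfold opResolvent
  rw [dif_pos h]
  exact Classical.choose_spec h

/-- The composition `A ∘ R`, an everywhere defined bounded operator, for `R = (l·I - A)⁻¹`. -/
noncomputable def IsResolventAt.opComp {A : X →ₗ.[ℂ] X} {l : ℂ} {R : X →L[ℂ] X}
    (h : IsResolventAt A l R) : X →L[ℂ] X where
  toLinearMap := A.toFun ∘ₗ R.toLinearMap.codRestrict A.domain h.mem_domain
  cont := by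
    have e : (fun x => A ⟨R x, h.mem_domain x⟩) = fun x => l • R x - x := by
      funext x
      have := h.right_inv x
      rw [sub_eq_iff_eq_add] at this
      rw [this]
      abel
    change Continuous fun x => A ⟨R x, h.mem_domain x⟩
    rw [e]
    fun_prop

open Classical in
/-- The bounded operator `A·R(l, A)` (and `0` for `l ∉ ρ(A)`). -/
noncomputable def opMulResolvent (A : X →ₗ.[ℂ] X) (l : ℂ) : X →L[ℂ] X :=
  if h : l ∈ opResolventSet A then (isResolventAt_opResolvent h).opComp else 0

/-- `A ∈ V_{[a,b]}(X)`: `A` is closed and densely defined, and `[a,b] ⊆ ρ(A)`. -/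
structure MemVab (a b : ℝ) (A : X →ₗ.[ℂ] X) : Prop where
  isClosed : A.IsClosed
  dense_domain : Dense (A.domain : Set X)
  subset_resolventSet : ∀ t ∈ Icc a b, (t : ℂ) ∈ opResolventSet A

/-- `m_A = max_{t ∈ [a,b]} ‖R(t,A)‖`. -/
noncomputable def mConst (a b : ℝ) (A : X →ₗ.[ℂ] X) : ℝ :=
  sSup ((fun t : ℝ => ‖opResolvent A (t : ℂ)‖) '' Icc a b)

/-- `δ_A = 1 / m_A`. -/
noncomputable def deltaConst (a b : ℝ) (A : X →ₗ.[ℂ] X) : ℝ :=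
  1 / mConst a b A

/-- `f(A) = ∫_a^b A·R(t,A) dτ(t)`, a Bochner integral in operator norm, where
`f(z) = ∫_a^b z/(t-z) dτ(t)` is the function of class `ZR[a,b]` with representing measure `τ`. -/
noncomputable def fOp (τ : Measure ℝ) (a b : ℝ) (A : X →ₗ.[ℂ] X) : X →L[ℂ] X :=
  ∫ t in Icc a b, opMulResolvent A (t : ℂ) ∂τ

/-- The integrand `(R(t,A)·B)ⁿ·R(t,A)·t` of the `n`-th coefficient. -/
noncomputable def coeffIntegrand (A : X →ₗ.[ℂ] X) (B : X →L[ℂ] X) (n : ℕ) (t : ℝ) : X →L[ℂ] X :=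
  (t : ℂ) • ((opResolvent A (t : ℂ) * B) ^ n * opResolvent A (t : ℂ))

/-- The coefficient `C_n = ∫_a^b (R(t,A)·B)ⁿ·R(t,A)·t dτ(t)`. -/
noncomputable def coeffC (τ : Measure ℝ) (a b : ℝ) (A : X →ₗ.[ℂ] X) (B : X →L[ℂ] X) (n : ℕ) :
    X →L[ℂ] X :=
  ∫ t in Icc a b, coeffIntegrand A B n t ∂τ

/-- The perturbed operator `A + z·B`, with domain `D(A)`. -/
def perturb (A : X →ₗ.[ℂ] X) (B : X →L[ℂ] X) (z : ℂ) : X →ₗ.[ℂ] X :=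
  (z • B).toLinearMap +ᵥ A

end Resolvent

/-- An operator ideal in `X`: a two-sided ideal of the algebra of bounded operators on `X`, complete
in a norm `‖·‖_I` with `‖P·S·Q‖_I ≤ ‖P‖·‖S‖_I·‖Q‖` and `‖S‖ ≤ ‖S‖_I`. -/
structure OperatorIdeal (X : Type*) [NormedAddCommGroup X] [NormedSpace ℂ X] where
  /-- the underlying linear subspace -/
  carrier : Submodule ℂ (X →L[ℂ] X)
  mul_mul_mem : ∀ (P Q : X →L[ℂ] X), ∀ S ∈ carrier, P * S * Q ∈ carrier
  /-- the norm of the ideal -/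
  nrm : carrier → ℝ
  nrm_add_le : ∀ S T, nrm (S + T) ≤ nrm S + nrm T
  nrm_smul : ∀ (c : ℂ) S, nrm (c • S) = ‖c‖ * nrm S
  opNorm_le_nrm : ∀ S : carrier, ‖(S : X →L[ℂ] X)‖ ≤ nrm S
  nrm_mul_mul_le : ∀ (P Q : X →L[ℂ] X) (S : carrier),
    nrm ⟨P * S * Q, mul_mul_mem P Q S S.2⟩ ≤ ‖P‖ * nrm S * ‖Q‖
  complete : ∀ u : ℕ → carrier,
    (∀ ε > 0, ∃ N, ∀ m ≥ N, ∀ n ≥ N, nrm (u m - u n) < ε) →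
      ∃ S, Tendsto (fun n => nrm (u n - S)) atTop (𝓝 0)

namespace OperatorIdeal

variable {X : Type*} [NormedAddCommGroup X] [NormedSpace ℂ X]

/-- The elements of the ideal, as a type which carries the norm of the ideal. -/
def Elem (I : OperatorIdeal X) : Type _ := I.carrier

instance (I : OperatorIdeal X) : AddCommGroup I.Elem := inferInstanceAs (AddCommGroup I.carrier)

instance (I : OperatorIdeal X) : Module ℂ I.Elem := inferInstanceAs (Module ℂ I.carrier)

instance (I : OperatorIdeal X) : Norm I.Elem := ⟨I.nrm⟩

/-- The inclusion of the ideal into the bounded operators. -/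
def toOp (I : OperatorIdeal X) : I.Elem →ₗ[ℂ] (X →L[ℂ] X) := I.carrier.subtype

theorem normCore (I : OperatorIdeal X) : NormedSpace.Core ℂ I.Elem where
  norm_nonneg S := (norm_nonneg (I.toOp S)).trans (I.opNorm_le_nrm S)
  norm_smul c S := I.nrm_smul c S
  norm_triangle S T := I.nrm_add_le S T
  norm_eq_zero_iff S := by
    constructor
    · intro h
      have h1 : ‖I.toOp S‖ ≤ 0 := (I.opNorm_le_nrm S).trans h.le
      exact Subtype.ext (norm_le_zero_iff.mp h1)
    · rintro rfl
      have := I.nrm_smul 0 0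
      rw [norm_zero, zero_mul, zero_smul] at this
      exact this

noncomputable instance (I : OperatorIdeal X) : NormedAddCommGroup I.Elem :=
  NormedAddCommGroup.ofCore I.normCore

noncomputable instance (I : OperatorIdeal X) : NormedSpace ℂ I.Elem :=
  NormedSpace.ofCore I.normCore

end OperatorIdeal

/-! The resolvent of `A + P` is the Neumann series `∑ (R P)ⁿ R`, `R = R(t, A)`, as soon as
`‖P R‖ < 1`. With `P = z B` this holds uniformly for `t ∈ [a, b]` on the disk `|z| m_A ‖B‖ < 1`,
where the terms are dominated by a geometric series; since `A R(t, A) = t R(t, A) - I`, integrating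
term by term gives `f(A + z B) - f(A) = ∑_{n ≥ 1} zⁿ C_n` in operator norm. For `n ≥ 1` the
integrand of `C_n` contains a factor `B`, so it is a continuous function with values in the ideal
and `C_n` is also a Bochner integral there, with `‖C_n‖_I = O((m_A ‖B‖)ⁿ)`. Hence the power series
converges in the ideal on the same disk, and the inclusion into the bounded operators identifies its
sum. -/

section PowerSeries

variable {𝕜 E : Type*} [NontriviallyNormedField 𝕜] [NormedAddCommGroup E] [NormedSpace 𝕜 E]
  {c : ℕ → E}

/-- The formal power series `∑ zⁿ c n` in one variable with vector coefficients `c n`, encoded as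
Mathlib's formal multilinear series so that its theory of analytic functions applies. -/
noncomputable def coeffSeries (𝕜 : Type*) [NontriviallyNormedField 𝕜] [NormedSpace 𝕜 E]
    (c : ℕ → E) : FormalMultilinearSeries 𝕜 𝕜 E :=
  fun n => ContinuousMultilinearMap.mkPiRing 𝕜 (Fin n) (c n)

theorem coeffSeries_apply (n : ℕ) (z : 𝕜) : (coeffSeries 𝕜 c n fun _ => z) = z ^ n • c n := by
  simp [coeffSeries]

theorem ofReal_inv_le_radius_coeffSeries {K q : ℝ} (hq : 0 < q) (hc : ∀ n, ‖c n‖ ≤ K * q ^ n) :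
    ENNReal.ofReal q⁻¹ ≤ (coeffSeries 𝕜 c).radius := by
  refine (coeffSeries 𝕜 c).le_radius_of_bound K (r := Real.toNNReal q⁻¹) fun n => ?_
  rw [Real.coe_toNNReal _ (inv_pos.mpr hq).le, coeffSeries, ContinuousMultilinearMap.norm_mkPiRing]
  calc ‖c n‖ * q⁻¹ ^ n ≤ K * q ^ n * q⁻¹ ^ n := by gcongr; exact hc n
    _ = K := by rw [mul_assoc, ← mul_pow, mul_inv_cancel₀ hq.ne', one_pow, mul_one]

theorem hasFPowerSeriesOnBall_sum_coeffSeries [CompleteSpace E] {K q : ℝ} (hq : 0 < q)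
    (hc : ∀ n, ‖c n‖ ≤ K * q ^ n) :
    HasFPowerSeriesOnBall (coeffSeries 𝕜 c).sum (coeffSeries 𝕜 c) 0 (ENNReal.ofReal q⁻¹) := by
  have hpos : 0 < ENNReal.ofReal q⁻¹ := ENNReal.ofReal_pos.mpr (inv_pos.mpr hq)
  have hle := ofReal_inv_le_radius_coeffSeries (𝕜 := 𝕜) hq hc
  exact ((coeffSeries 𝕜 c).hasFPowerSeriesOnBall (hpos.trans_le hle)).mono hpos hle

variable {F : 𝕜 → E} {r : ENNReal}

theorem hasSum_pow_smul_of_hasFPowerSeriesOnBall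
    (hF : HasFPowerSeriesOnBall F (coeffSeries 𝕜 c) 0 r) {z : 𝕜} (hz : z ∈ Metric.eball 0 r) :
    HasSum (fun n => z ^ n • c n) (F z) := by
  simpa only [coeffSeries_apply, zero_add] using hF.hasSum hz

theorem summable_norm_pow_smul_of_hasFPowerSeriesOnBall
    (hF : HasFPowerSeriesOnBall F (coeffSeries 𝕜 c) 0 r) {z : 𝕜} (hz : z ∈ Metric.eball 0 r) :
    Summable fun n => ‖z ^ n • c n‖ := by
  simpa only [coeffSeries_apply] using
    (coeffSeries 𝕜 c).summable_norm_apply (Metric.eball_subset_eball hF.r_le hz)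

theorem eq_inv_factorial_smul_iteratedDeriv_of_hasFPowerSeriesOnBall [CharZero 𝕜] [CompleteSpace E]
    (hF : HasFPowerSeriesOnBall F (coeffSeries 𝕜 c) 0 r) (n : ℕ) :
    c n = (n.factorial : 𝕜)⁻¹ • iteratedDeriv n F 0 := by
  rw [iteratedDeriv_eq_iteratedFDeriv, ← hF.factorial_smul 1 n, ← Nat.cast_smul_eq_nsmul 𝕜,
    inv_smul_smul₀ (Nat.cast_ne_zero.mpr n.factorial_ne_zero), coeffSeries_apply, one_pow, one_smul]

end PowerSeries

theorem norm_mul_pow_mul_le {𝓐 : Type*} [SeminormedRing 𝓐] {R : 𝓐} {m : ℝ} (hR : ‖R‖ ≤ m) (B : 𝓐)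
    (n : ℕ) : ‖(R * B) ^ n * R‖ ≤ m ^ (n + 1) * ‖B‖ ^ n := by
  have hm : 0 ≤ m := (norm_nonneg R).trans hR
  induction n with
  | zero => simpa using hR
  | succ n ih =>
    calc ‖(R * B) ^ (n + 1) * R‖ = ‖R * B * ((R * B) ^ n * R)‖ := by rw [pow_succ', mul_assoc]
      _ ≤ ‖R‖ * ‖B‖ * ‖(R * B) ^ n * R‖ :=
        (norm_mul_le _ _).trans (by gcongr; exact norm_mul_le _ _)
      _ ≤ m * ‖B‖ * (m ^ (n + 1) * ‖B‖ ^ n) := by gcongr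
      _ = m ^ (n + 1 + 1) * ‖B‖ ^ (n + 1) := by ring

section Integral

variable {α E : Type*} [MeasurableSpace α] {μ : Measure α} [NormedAddCommGroup E] [NormedSpace ℝ E]

theorem norm_setIntegral_le_mul_setIntegral {s : Set α} {g : α → E} {h : α → ℝ} {K : ℝ}
    (hs : MeasurableSet s) (hh : IntegrableOn h s μ) (hle : ∀ t ∈ s, ‖g t‖ ≤ K * h t) :
    ‖∫ t in s, g t ∂μ‖ ≤ K * ∫ t in s, h t ∂μ := by
  rw [← integral_const_mul]
  exact norm_integral_le_of_norm_le (hh.integrable.const_mul K)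
    ((ae_restrict_mem hs).mono hle)

theorem hasSum_integral_of_norm_le_geometric {G : ℕ → α → E} {g : α → E} {h : α → ℝ} {q : ℝ}
    (hG : ∀ n, AEStronglyMeasurable (G n) μ) (hh : Integrable h μ) (hq₀ : 0 ≤ q) (hq₁ : q < 1)
    (hle : ∀ n, ∀ᵐ t ∂μ, ‖G n t‖ ≤ q ^ n * h t) (hsum : ∀ᵐ t ∂μ, HasSum (fun n => G n t) (g t)) :
    HasSum (fun n => ∫ t, G n t ∂μ) (∫ t, g t ∂μ) := by
  have hgeom := summable_geometric_of_lt_one hq₀ hq₁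
  refine hasSum_integral_of_dominated_convergence (fun n t => q ^ n * h t) hG hle
    (ae_of_all _ fun t => hgeom.mul_right (h t)) ?_ hsum
  simpa only [tsum_mul_right] using hh.const_mul (∑' n, q ^ n)

end Integral

section Resolvent

variable {X : Type*} [NormedAddCommGroup X] [NormedSpace ℂ X] {A : X →ₗ.[ℂ] X} {l m : ℂ}
  {R S P : X →L[ℂ] X}

namespace IsResolventAt

theorem unique (hR : IsResolventAt A l R) (hS : IsResolventAt A l S) : R = S := by
  ext x
  have h := hR.left_inv ⟨S x, hS.mem_domain x⟩
  rwa [hS.right_inv x] at h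

theorem opResolvent_eq (hR : IsResolventAt A l R) : opResolvent A l = R :=
  (isResolventAt_opResolvent ⟨R, hR⟩).unique hR

theorem map_apply_eq (hR : IsResolventAt A l R) (x : X) :
    A ⟨R x, hR.mem_domain x⟩ = l • R x - x := by
  rw [eq_sub_iff_add_eq, add_comm, ← sub_eq_iff_eq_add.mp (hR.right_inv x)]

theorem ne_zero [Nontrivial X] (hR : IsResolventAt A l R) : R ≠ 0 := by
  rintro rfl
  obtain ⟨x, hx⟩ := exists_ne (0 : X)
  have h : l • (0 : X) - A 0 = x := hR.right_inv x
  exact hx (by rw [← h, A.map_zero, smul_zero, sub_zero])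

theorem isClosed (hR : IsResolventAt A l R) : A.IsClosed := by
  have hgraph : (A.graph : Set (X × X)) = {p | R (l • p.1 - p.2) = p.1} := by
    ext ⟨x, y⟩
    simp only [SetLike.mem_coe, LinearPMap.mem_graph_iff, mem_ofPred_eq]
    constructor
    · rintro ⟨u, rfl, rfl⟩
      exact hR.left_inv u
    · intro hx
      refine ⟨⟨R (l • x - y), hR.mem_domain _⟩, hx, ?_⟩
      rw [hR.map_apply_eq, hx, sub_sub_cancel]
  rw [LinearPMap.IsClosed, hgraph]
  exact isClosed_eq (by fun_prop) (by fun_prop)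

theorem sub_eq_smul_mul (hR : IsResolventAt A l R) (hS : IsResolventAt A m S) :
    S - R = (l - m) • (S * R) := by
  ext x
  have h := hS.left_inv ⟨R x, hR.mem_domain x⟩
  rw [hR.map_apply_eq, ← sub_add, ← sub_smul, map_add, map_smul] at h
  change (m - l) • S (R x) + S x = R x at h
  change S x - R x = (l - m) • S (R x)
  rw [← neg_sub m l, neg_smul, eq_neg_iff_add_eq_zero, sub_add_eq_add_sub, add_comm, h, sub_self]

theorem isUnit_one_add_smul (hR : IsResolventAt A l R) (hS : IsResolventAt A m S) :
    IsUnit (1 + (m - l) • R) := by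
  have hRS : R - S = (m - l) • (R * S) := hS.sub_eq_smul_mul hR
  have hSR : R - S = (m - l) • (S * R) := by
    rw [← neg_sub S R, hR.sub_eq_smul_mul hS, ← neg_smul, neg_sub]
  refine ⟨⟨1 + (m - l) • R, 1 - (m - l) • S, ?_, ?_⟩, rfl⟩
  · calc (1 + (m - l) • R) * (1 - (m - l) • S)
        = 1 + (m - l) • (R - S) - (m - l) • (m - l) • (R * S) := by
          simp only [add_mul, mul_sub, one_mul, mul_one, smul_mul_assoc, mul_smul_comm]
          module
      _ = 1 := by rw [hRS, add_sub_cancel_right]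
  · calc (1 - (m - l) • S) * (1 + (m - l) • R)
        = 1 + (m - l) • (R - S) - (m - l) • (m - l) • (S * R) := by
          simp only [sub_mul, mul_add, one_mul, mul_one, smul_mul_assoc, mul_smul_comm]
          module
      _ = 1 := by rw [hSR, add_sub_cancel_right]

theorem eq_mul_inverse (hR : IsResolventAt A l R) (hS : IsResolventAt A m S) :
    S = R * Ring.inverse (1 + (m - l) • R) := by
  rw [Ring.eq_mul_inverse_iff_mul_eq _ _ _ (hR.isUnit_one_add_smul hS), mul_add, mul_one,
    mul_smul_comm, ← neg_sub l m, neg_smul, ← hR.sub_eq_smul_mul hS]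
  abel

theorem vadd (hR : IsResolventAt A l R) (hu : IsUnit (1 - P * R)) :
    IsResolventAt (P.toLinearMap +ᵥ A) l (R * Ring.inverse (1 - P * R)) where
  mem_domain x := hR.mem_domain _
  right_inv x := by
    set V := Ring.inverse (1 - P * R)
    have hV : V x - P (R (V x)) = x := DFunLike.congr_fun (Ring.mul_inverse_cancel _ hu) x
    change l • R (V x) - (P (R (V x)) + A ⟨R (V x), hR.mem_domain (V x)⟩) = x
    rw [hR.map_apply_eq, add_comm, ← sub_sub, sub_sub_cancel, hV]
  left_inv y := by
    set V := Ring.inverse (1 - P * R)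
    have hV : V (l • (y : X) - A y - P (R (l • (y : X) - A y))) = l • (y : X) - A y :=
      DFunLike.congr_fun (Ring.inverse_mul_cancel _ hu) (l • (y : X) - A y)
    rw [hR.left_inv] at hV
    change R (V (l • (y : X) - (P y + A y))) = y
    rw [add_comm, ← sub_sub, hV, hR.left_inv]

variable [CompleteSpace X]

theorem vadd_of_norm_lt_one (hR : IsResolventAt A l R) (hP : ‖P * R‖ < 1) :
    IsResolventAt (P.toLinearMap +ᵥ A) l (R * Ring.inverse (1 - P * R)) :=
  hR.vadd (isUnit_one_sub_of_norm_lt_one hP)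

theorem hasSum_opResolvent_vadd (hR : IsResolventAt A l R) (hP : ‖P * R‖ < 1) :
    HasSum (fun n : ℕ => (R * P) ^ n * R) (opResolvent (P.toLinearMap +ᵥ A) l) := by
  rw [(hR.vadd_of_norm_lt_one hP).opResolvent_eq]
  simpa only [mul_pow_mul] using (hasSum_geom_series_inverse _ hP).mul_left R

end IsResolventAt

theorem continuousOn_opResolvent [CompleteSpace X] (A : X →ₗ.[ℂ] X) :
    ContinuousOn (opResolvent A) (opResolventSet A) := by
  intro l hl
  have hR := isResolventAt_opResolvent hl
  have hinv : ContinuousAt Ring.inverse (1 + (l - l) • opResolvent A l) := by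
    simpa using NormedRing.inverse_continuousAt (1 : (X →L[ℂ] X)ˣ)
  have hcont : ContinuousAt
      (fun s => opResolvent A l * Ring.inverse (1 + (s - l) • opResolvent A l)) l :=
    continuousAt_const.mul (ContinuousAt.comp (g := Ring.inverse) hinv (by fun_prop))
  exact hcont.continuousWithinAt.congr
    (fun s hs => hR.eq_mul_inverse (isResolventAt_opResolvent hs)) (hR.eq_mul_inverse hR)

theorem opMulResolvent_eq (hl : l ∈ opResolventSet A) :
    opMulResolvent A l = l • opResolvent A l - 1 := by
  rw [opMulResolvent, dif_pos hl]
  ext x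
  exact (isResolventAt_opResolvent hl).map_apply_eq x

end Resolvent

section MemVab

variable {X : Type*} [NormedAddCommGroup X] [NormedSpace ℂ X] {a b : ℝ} {A : X →ₗ.[ℂ] X}

theorem mConst_nonneg (a b : ℝ) (A : X →ₗ.[ℂ] X) : 0 ≤ mConst a b A :=
  Real.sSup_nonneg (by rintro _ ⟨t, -, rfl⟩; exact norm_nonneg _)

theorem mul_lt_one_of_mem_ball_deltaConst_div {B : X →L[ℂ] X} {z : ℂ}
    (hz : z ∈ Metric.ball 0 (deltaConst a b A / ‖B‖)) : ‖z‖ * (mConst a b A * ‖B‖) < 1 := by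
  rw [mem_ball_zero_iff, deltaConst, div_div, one_div] at hz
  have hq : 0 < mConst a b A * ‖B‖ := inv_pos.mp ((norm_nonneg z).trans_lt hz)
  rwa [← lt_inv_mul_iff₀' hq, mul_one]

namespace MemVab

variable [CompleteSpace X]

theorem continuousOn_opResolvent (hA : MemVab a b A) :
    ContinuousOn (fun t : ℝ => opResolvent A (t : ℂ)) (Icc a b) :=
  (_root_.continuousOn_opResolvent A).comp Complex.continuous_ofReal.continuousOn
    hA.subset_resolventSet

theorem continuousOn_coeffIntegrand (hA : MemVab a b A) (B : X →L[ℂ] X) (n : ℕ) :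
    ContinuousOn (coeffIntegrand A B n) (Icc a b) :=
  have hR := hA.continuousOn_opResolvent
  Complex.continuous_ofReal.continuousOn.smul (((hR.mul continuousOn_const).pow n).mul hR)

theorem continuousOn_opMulResolvent (hA : MemVab a b A) :
    ContinuousOn (fun t : ℝ => opMulResolvent A (t : ℂ)) (Icc a b) :=
  ((Complex.continuous_ofReal.continuousOn.smul hA.continuousOn_opResolvent).sub
    continuousOn_const).congr fun t ht => opMulResolvent_eq (hA.subset_resolventSet t ht)

theorem norm_opResolvent_le (hA : MemVab a b A) {t : ℝ} (ht : t ∈ Icc a b) :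
    ‖opResolvent A (t : ℂ)‖ ≤ mConst a b A :=
  le_csSup (isCompact_Icc.image_of_continuousOn hA.continuousOn_opResolvent.norm).bddAbove
    (mem_image_of_mem _ ht)

theorem mConst_pos [Nontrivial X] (hA : MemVab a b A) (hab : a ≤ b) : 0 < mConst a b A := by
  have ha : a ∈ Icc a b := left_mem_Icc.mpr hab
  have hR := (isResolventAt_opResolvent (hA.subset_resolventSet a ha)).ne_zero
  exact (norm_pos_iff.mpr hR).trans_le (hA.norm_opResolvent_le ha)

theorem norm_coeffIntegrand_le (hA : MemVab a b A) (B : X →L[ℂ] X) (n : ℕ) {t : ℝ}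
    (ht : t ∈ Icc a b) :
    ‖coeffIntegrand A B n t‖ ≤ mConst a b A ^ (n + 1) * ‖B‖ ^ n * |t| := by
  rw [coeffIntegrand, norm_smul, Complex.norm_real, Real.norm_eq_abs, mul_comm]
  gcongr
  exact norm_mul_pow_mul_le (hA.norm_opResolvent_le ht) B n

variable {B : X →L[ℂ] X} {z : ℂ}

theorem norm_smul_mul_opResolvent_lt_one (hA : MemVab a b A)
    (hz : ‖z‖ * (mConst a b A * ‖B‖) < 1) {t : ℝ} (ht : t ∈ Icc a b) :
    ‖z • B * opResolvent A (t : ℂ)‖ < 1 :=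
  calc ‖z • B * opResolvent A (t : ℂ)‖ ≤ ‖z • B‖ * ‖opResolvent A (t : ℂ)‖ := norm_mul_le _ _
    _ ≤ ‖z‖ * ‖B‖ * mConst a b A := by
      rw [norm_smul]
      gcongr
      exact hA.norm_opResolvent_le ht
    _ < 1 := by rwa [mul_assoc, mul_comm ‖B‖]

theorem memVab_perturb (hA : MemVab a b A) (hab : a ≤ b) (hz : ‖z‖ * (mConst a b A * ‖B‖) < 1) :
    MemVab a b (perturb A B z) := by
  have hres : ∀ t ∈ Icc a b, (t : ℂ) ∈ opResolventSet (perturb A B z) := fun t ht =>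
    ⟨_, (isResolventAt_opResolvent (hA.subset_resolventSet t ht)).vadd_of_norm_lt_one
      (hA.norm_smul_mul_opResolvent_lt_one hz ht)⟩
  exact ⟨(isResolventAt_opResolvent (hres a (left_mem_Icc.mpr hab))).isClosed, hA.dense_domain,
    hres⟩

theorem hasSum_coeffIntegrand (hA : MemVab a b A) (hz : ‖z‖ * (mConst a b A * ‖B‖) < 1) {t : ℝ}
    (ht : t ∈ Icc a b) :
    HasSum (fun n : ℕ => z ^ n • coeffIntegrand A B n t)
      ((t : ℂ) • opResolvent (perturb A B z) (t : ℂ)) := by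
  have hsum := (isResolventAt_opResolvent (hA.subset_resolventSet t ht)).hasSum_opResolvent_vadd
    (hA.norm_smul_mul_opResolvent_lt_one hz ht)
  simpa only [perturb, coeffIntegrand, mul_smul_comm, smul_pow, smul_mul_assoc,
    smul_comm (t : ℂ)] using hsum.const_smul (t : ℂ)

variable (τ : Measure ℝ) [IsFiniteMeasureOnCompacts τ]

theorem norm_coeffC_le (hA : MemVab a b A) (B : X →L[ℂ] X) (n : ℕ) :
    ‖coeffC τ a b A B n‖ ≤ mConst a b A ^ (n + 1) * ‖B‖ ^ n * ∫ t in Icc a b, |t| ∂τ :=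
  norm_setIntegral_le_mul_setIntegral measurableSet_Icc continuous_abs.integrableOn_Icc
    fun _ ht => hA.norm_coeffIntegrand_le B n ht

theorem hasSum_coeffC (hA : MemVab a b A) (hz : ‖z‖ * (mConst a b A * ‖B‖) < 1) :
    HasSum (fun n : ℕ => z ^ n • coeffC τ a b A B n)
      (∫ t in Icc a b, (t : ℂ) • opResolvent (perturb A B z) (t : ℂ) ∂τ) := by
  have hm := mConst_nonneg a b A
  have hbound : ∀ n, ∀ᵐ t ∂τ.restrict (Icc a b), ‖z ^ n • coeffIntegrand A B n t‖ ≤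
      (‖z‖ * (mConst a b A * ‖B‖)) ^ n * (mConst a b A * |t|) := fun n => by
    filter_upwards [ae_restrict_mem measurableSet_Icc] with t ht
    calc ‖z ^ n • coeffIntegrand A B n t‖ = ‖z‖ ^ n * ‖coeffIntegrand A B n t‖ := by
          rw [norm_smul, norm_pow]
      _ ≤ ‖z‖ ^ n * (mConst a b A ^ (n + 1) * ‖B‖ ^ n * |t|) := by
          gcongr
          exact hA.norm_coeffIntegrand_le B n ht
      _ = (‖z‖ * (mConst a b A * ‖B‖)) ^ n * (mConst a b A * |t|) := by ring
  simp only [coeffC, ← integral_smul]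
  refine hasSum_integral_of_norm_le_geometric (fun n => ?_)
    (continuous_abs.integrableOn_Icc.integrable.const_mul _) (by positivity) hz hbound ?_
  · exact ((hA.continuousOn_coeffIntegrand B n).integrableOn_Icc.smul (z ^ n)).aestronglyMeasurable
  · filter_upwards [ae_restrict_mem measurableSet_Icc] with t ht
    exact hA.hasSum_coeffIntegrand hz ht

theorem fOp_eq (hA : MemVab a b A) :
    fOp τ a b A =
      (∫ t in Icc a b, (t : ℂ) • opResolvent A (t : ℂ) ∂τ) - ∫ _ in Icc a b, 1 ∂τ := by
  have hint : IntegrableOn (fun t : ℝ => (t : ℂ) • opResolvent A (t : ℂ)) (Icc a b) τ :=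
    (Complex.continuous_ofReal.continuousOn.smul hA.continuousOn_opResolvent).integrableOn_Icc
  rw [fOp, ← integral_sub hint continuousOn_const.integrableOn_Icc]
  exact setIntegral_congr_fun measurableSet_Icc fun t ht =>
    opMulResolvent_eq (hA.subset_resolventSet t ht)

theorem hasSum_coeffC_succ (hA : MemVab a b A) (hab : a ≤ b)
    (hz : ‖z‖ * (mConst a b A * ‖B‖) < 1) :
    HasSum (fun n : ℕ => z ^ (n + 1) • coeffC τ a b A B (n + 1))
      (fOp τ a b (perturb A B z) - fOp τ a b A) := by
  have hzero : coeffC τ a b A B 0 = ∫ t in Icc a b, (t : ℂ) • opResolvent A (t : ℂ) ∂τ := by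
    simp only [coeffC, coeffIntegrand, pow_zero, one_mul]
  rw [(hA.memVab_perturb hab hz).fOp_eq τ, hA.fOp_eq τ, sub_sub_sub_cancel_right, ← hzero]
  simpa using (hasSum_nat_add_iff' 1).mpr (hA.hasSum_coeffC τ hz)

end MemVab

end MemVab

namespace OperatorIdeal

variable {X : Type*} [NormedAddCommGroup X] [NormedSpace ℂ X] (I : OperatorIdeal X)

instance : CompleteSpace I.Elem := by
  refine Metric.complete_of_cauchySeq_tendsto fun u hu => ?_
  obtain ⟨S, hS⟩ := I.complete u fun ε hε => by
    have h := Metric.cauchySeq_iff.mp hu ε hε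
    simp only [dist_eq_norm] at h
    exact h
  exact ⟨S, tendsto_iff_norm_sub_tendsto_zero.mpr hS⟩

theorem toOp_injective : Function.Injective I.toOp := Subtype.val_injective

/-- The inclusion of the ideal into the bounded operators as a continuous linear map, so that it
commutes with sums and integrals. -/
noncomputable def toOpL : I.Elem →L[ℂ] (X →L[ℂ] X) :=
  I.toOp.mkContinuous 1 fun S => (I.opNorm_le_nrm S).trans_eq (one_mul _).symm

theorem toOpL_apply (S : I.Elem) : I.toOpL S = I.toOp S := rfl

/-- The two-sided multiplication `(P, Q) ↦ P·S·Q` of an element `S` of the ideal, as a continuous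
bilinear map into the ideal. -/
noncomputable def sandwich (S : I.Elem) : (X →L[ℂ] X) →L[ℂ] (X →L[ℂ] X) →L[ℂ] I.Elem :=
  LinearMap.mkContinuous₂
    (LinearMap.mk₂ ℂ
      (fun P Q => (⟨P * I.toOp S * Q, I.mul_mul_mem P Q _ S.2⟩ : I.carrier) : _ → _ → I.Elem)
      (fun P P' Q => I.toOp_injective <|
        show (P + P') * I.toOp S * Q = P * I.toOp S * Q + P' * I.toOp S * Q by
          rw [add_mul, add_mul])
      (fun c P Q => I.toOp_injective <|
        show (c • P) * I.toOp S * Q = c • (P * I.toOp S * Q) by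
          rw [smul_mul_assoc, smul_mul_assoc])
      (fun P Q Q' => I.toOp_injective <|
        show P * I.toOp S * (Q + Q') = P * I.toOp S * Q + P * I.toOp S * Q' from mul_add _ _ _)
      (fun c P Q => I.toOp_injective <|
        show P * I.toOp S * (c • Q) = c • (P * I.toOp S * Q) from mul_smul_comm _ _ _))
    ‖S‖ fun P Q => (I.nrm_mul_mul_le P Q S).trans_eq
      (show ‖P‖ * ‖S‖ * ‖Q‖ = ‖S‖ * ‖P‖ * ‖Q‖ by rw [mul_comm ‖P‖])

theorem toOp_sandwich (S : I.Elem) (P Q : X →L[ℂ] X) :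
    I.toOp (I.sandwich S P Q) = P * I.toOp S * Q := rfl

theorem norm_sandwich_le (S : I.Elem) (P Q : X →L[ℂ] X) :
    ‖I.sandwich S P Q‖ ≤ ‖P‖ * ‖S‖ * ‖Q‖ :=
  I.nrm_mul_mul_le P Q S

/-- The integrand `(R(t,A)·B)ⁿ⁺¹·R(t,A)·t` of `C_{n+1}` as an element of the ideal, obtained by
splitting off the last factor `B`. -/
noncomputable def coeffIntegrandElem (A : X →ₗ.[ℂ] X) (B : I.Elem) (n : ℕ) (t : ℝ) : I.Elem :=
  (t : ℂ) • I.sandwich B ((opResolvent A (t : ℂ) * I.toOp B) ^ n * opResolvent A (t : ℂ))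
    (opResolvent A (t : ℂ))

theorem toOp_coeffIntegrandElem (A : X →ₗ.[ℂ] X) (B : I.Elem) (n : ℕ) (t : ℝ) :
    I.toOp (I.coeffIntegrandElem A B n t) = coeffIntegrand A (I.toOp B) (n + 1) t := by
  rw [coeffIntegrandElem, map_smul, toOp_sandwich, coeffIntegrand, pow_succ]
  simp only [mul_assoc]

/-- The coefficient `C_n` as an element of the ideal, for `n ≥ 1`. The value at `0` is `0`, the
constant coefficient of the expansion of `f(A + z·B) - f(A)`, and not `coeffC τ a b A B 0`, which
need not belong to the ideal. -/
noncomputable def coeffElem (τ : Measure ℝ) (a b : ℝ) (A : X →ₗ.[ℂ] X) (B : I.Elem) : ℕ → I.Elem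
  | 0 => 0
  | n + 1 => ∫ t in Icc a b, I.coeffIntegrandElem A B n t ∂τ

variable {I} {a b : ℝ} {A : X →ₗ.[ℂ] X}

theorem nontrivial_of_ne_zero {B : I.Elem} (hB : B ≠ 0) : Nontrivial X :=
  have ⟨_, hx⟩ := ContinuousLinearMap.exists_ne_zero ((map_ne_zero_iff _ I.toOp_injective).mpr hB)
  ⟨⟨_, _, hx⟩⟩

theorem hasSum_coeffElem_succ {τ : Measure ℝ} {B F : I.Elem} {z : ℂ}
    (hF : HasSum (fun n => z ^ n • I.coeffElem τ a b A B n) F) :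
    HasSum (fun n => z ^ (n + 1) • I.coeffElem τ a b A B (n + 1)) F := by
  simpa [coeffElem] using (hasSum_nat_add_iff' 1).mpr hF

variable [CompleteSpace X]

theorem continuousOn_coeffIntegrandElem (hA : MemVab a b A) (B : I.Elem) (n : ℕ) :
    ContinuousOn (I.coeffIntegrandElem A B n) (Icc a b) :=
  have hR := hA.continuousOn_opResolvent
  Complex.continuous_ofReal.continuousOn.smul (((I.sandwich B).continuous.comp_continuousOn
    (((hR.mul continuousOn_const).pow n).mul hR)).clm_apply hR)

theorem norm_coeffIntegrandElem_le (hA : MemVab a b A) (B : I.Elem) (n : ℕ) {t : ℝ}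
    (ht : t ∈ Icc a b) :
    ‖I.coeffIntegrandElem A B n t‖ ≤
      mConst a b A ^ (n + 1 + 1) * ‖I.toOp B‖ ^ n * ‖B‖ * |t| := by
  have hR := hA.norm_opResolvent_le ht
  have hm := mConst_nonneg a b A
  rw [coeffIntegrandElem, norm_smul, Complex.norm_real, Real.norm_eq_abs, mul_comm]
  gcongr
  refine (I.norm_sandwich_le B _ _).trans ?_
  calc _ ≤ mConst a b A ^ (n + 1) * ‖I.toOp B‖ ^ n * ‖B‖ * mConst a b A := by
        gcongr
        exact norm_mul_pow_mul_le hR _ n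
    _ = mConst a b A ^ (n + 1 + 1) * ‖I.toOp B‖ ^ n * ‖B‖ := by ring

variable (τ : Measure ℝ) [IsFiniteMeasureOnCompacts τ]

theorem toOp_coeffElem_succ (hA : MemVab a b A) (B : I.Elem) (n : ℕ) :
    I.toOp (I.coeffElem τ a b A B (n + 1)) = coeffC τ a b A (I.toOp B) (n + 1) := by
  have h := I.toOpL.integral_comp_comm
    ((continuousOn_coeffIntegrandElem hA B n).integrableOn_Icc (μ := τ))
  simp only [toOpL_apply, toOp_coeffIntegrandElem] at h
  exact h.symm

theorem norm_coeffElem_succ_le (hA : MemVab a b A) (B : I.Elem) (n : ℕ) :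
    ‖I.coeffElem τ a b A B (n + 1)‖ ≤
      mConst a b A ^ (n + 1 + 1) * ‖I.toOp B‖ ^ n * ‖B‖ * ∫ t in Icc a b, |t| ∂τ :=
  norm_setIntegral_le_mul_setIntegral measurableSet_Icc continuous_abs.integrableOn_Icc
    fun _ ht => norm_coeffIntegrandElem_le hA B n ht

theorem norm_coeffElem_le_geometric (hA : MemVab a b A) {B : I.Elem} (hB : B ≠ 0) (n : ℕ) :
    ‖I.coeffElem τ a b A B n‖ ≤
      mConst a b A * ‖B‖ * (∫ t in Icc a b, |t| ∂τ) / ‖I.toOp B‖ *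
        (mConst a b A * ‖I.toOp B‖) ^ n := by
  have hm := mConst_nonneg a b A
  have hB' : I.toOp B ≠ 0 := (map_ne_zero_iff _ I.toOp_injective).mpr hB
  cases n with
  | zero =>
    rw [coeffElem, norm_zero]
    positivity
  | succ n =>
    refine (norm_coeffElem_succ_le τ hA B n).trans_eq ?_
    field_simp
    ring

theorem hasFPowerSeriesOnBall_coeffElem (hA : MemVab a b A) (hab : a ≤ b) {B : I.Elem}
    (hB : B ≠ 0) :
    HasFPowerSeriesOnBall (coeffSeries ℂ (I.coeffElem τ a b A B)).sum
      (coeffSeries ℂ (I.coeffElem τ a b A B)) 0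
      (ENNReal.ofReal (deltaConst a b A / ‖I.toOp B‖)) := by
  have := nontrivial_of_ne_zero hB
  have hq : 0 < mConst a b A * ‖I.toOp B‖ := mul_pos (hA.mConst_pos hab)
    (norm_pos_iff.mpr ((map_ne_zero_iff _ I.toOp_injective).mpr hB))
  rw [deltaConst, div_div, one_div]
  exact hasFPowerSeriesOnBall_sum_coeffSeries hq (norm_coeffElem_le_geometric τ hA hB)

theorem toOp_eq_fOp_sub_of_hasSum (hA : MemVab a b A) (hab : a ≤ b) {B F : I.Elem} {z : ℂ}
    (hz : ‖z‖ * (mConst a b A * ‖I.toOp B‖) < 1)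
    (hF : HasSum (fun n => z ^ (n + 1) • I.coeffElem τ a b A B (n + 1)) F) :
    I.toOp F = fOp τ a b (perturb A (I.toOp B) z) - fOp τ a b A := by
  refine (hF.mapL I.toOpL).unique ?_
  simpa only [map_smul, toOpL_apply, toOp_coeffElem_succ τ hA] using hA.hasSum_coeffC_succ τ hab hz

end OperatorIdeal

theorem fOp_analytic_in_parameter_general {X : Type*} [NormedAddCommGroup X] [NormedSpace ℂ X]
    [CompleteSpace X] (I : OperatorIdeal X) {a b : ℝ} (hab : a ≤ b)
    (τ : Measure ℝ) [IsFiniteMeasureOnCompacts τ]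
    {A : X →ₗ.[ℂ] X} (hA : MemVab a b A) {B : I.Elem} (hB : B ≠ 0) :
    ∃ (F : ℂ → I.Elem) (C : ℕ → I.Elem),
      (∀ z ∈ Metric.ball (0 : ℂ) (deltaConst a b A / ‖I.toOp B‖),
        MemVab a b (perturb A (I.toOp B) z) ∧
        IntegrableOn (fun t : ℝ => opMulResolvent (perturb A (I.toOp B) z) (t : ℂ)) (Icc a b) τ ∧
        I.toOp (F z) = fOp τ a b (perturb A (I.toOp B) z) - fOp τ a b A ∧
        Summable (fun n : ℕ => ‖z ^ (n + 1) • C (n + 1)‖) ∧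
        HasSum (fun n : ℕ => z ^ (n + 1) • C (n + 1)) (F z)) ∧
      (∀ n : ℕ, 1 ≤ n →
        IntegrableOn (coeffIntegrand A (I.toOp B) n) (Icc a b) τ ∧
        I.toOp (C n) = coeffC τ a b A (I.toOp B) n ∧
        C n = ((n.factorial : ℂ)⁻¹) • iteratedDeriv n F 0 ∧
        ‖I.toOp (C n)‖ ≤
          mConst a b A ^ (n + 1) * ‖I.toOp B‖ ^ n * ∫ t in Icc a b, |t| ∂τ ∧
        ‖C n‖ ≤
          mConst a b A ^ (n + 1) * ‖I.toOp B‖ ^ (n - 1) * ‖B‖ * ∫ t in Icc a b, |t| ∂τ) ∧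
      AnalyticOnNhd ℂ F (Metric.ball (0 : ℂ) (deltaConst a b A / ‖I.toOp B‖)) := by
  have hF := OperatorIdeal.hasFPowerSeriesOnBall_coeffElem τ hA hab hB
  have hball := Metric.eball_ofReal (x := (0 : ℂ)) (ε := deltaConst a b A / ‖I.toOp B‖)
  refine ⟨(coeffSeries ℂ (I.coeffElem τ a b A B)).sum, I.coeffElem τ a b A B, fun z hz => ?_,
    fun n hn => ?_, hball ▸ hF.analyticOnNhd⟩
  · have hz' := mul_lt_one_of_mem_ball_deltaConst_div hz
    have hV := hA.memVab_perturb hab hz'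
    rw [← hball] at hz
    have hsum := OperatorIdeal.hasSum_coeffElem_succ
      (hasSum_pow_smul_of_hasFPowerSeriesOnBall hF hz)
    exact ⟨hV, hV.continuousOn_opMulResolvent.integrableOn_Icc,
      OperatorIdeal.toOp_eq_fOp_sub_of_hasSum τ hA hab hz' hsum,
      (summable_nat_add_iff 1).mpr (summable_norm_pow_smul_of_hasFPowerSeriesOnBall hF hz), hsum⟩
  · obtain ⟨k, rfl⟩ := Nat.exists_eq_add_of_le' hn
    have hC := OperatorIdeal.toOp_coeffElem_succ τ hA B k
    exact ⟨(hA.continuousOn_coeffIntegrand _ _).integrableOn_Icc, hC,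
      eq_inv_factorial_smul_iteratedDeriv_of_hasFPowerSeriesOnBall hF _,
      hC ▸ hA.norm_coeffC_le τ _ _, OperatorIdeal.norm_coeffElem_succ_le τ hA B k⟩

/-- Analyticity of `z ↦ f(A + z·B) - f(A)` in the norm of an operator ideal `I ∋ B`, on the disk
`|z| < δ_A / ‖B‖`. Here `F z` is the element `f(A + z·B) - f(A)` of `I` and, for `n ≥ 1`, `C n` is
the element `C_n` of `I`; `‖F z‖`, `‖C n‖`, sums, derivatives and analyticity refer to the norm
of `I`, while `‖I.toOp B‖` is the operator norm of `B`. -/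
theorem fOp_analytic_in_parameter {X : Type*} [NormedAddCommGroup X] [NormedSpace ℂ X]
    [CompleteSpace X] (I : OperatorIdeal X) (a b : ℝ) (hab : a < b)
    (τ : Measure ℝ) [IsFiniteMeasure τ]
    (A : X →ₗ.[ℂ] X) (hA : MemVab a b A) (B : I.Elem) (hB : B ≠ 0) :
    ∃ (F : ℂ → I.Elem) (C : ℕ → I.Elem),
      (∀ z ∈ Metric.ball (0 : ℂ) (deltaConst a b A / ‖I.toOp B‖),
        MemVab a b (perturb A (I.toOp B) z) ∧
        IntegrableOn (fun t : ℝ => opMulResolvent (perturb A (I.toOp B) z) (t : ℂ)) (Icc a b) τ ∧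
        I.toOp (F z) = fOp τ a b (perturb A (I.toOp B) z) - fOp τ a b A ∧
        Summable (fun n : ℕ => ‖z ^ (n + 1) • C (n + 1)‖) ∧
        HasSum (fun n : ℕ => z ^ (n + 1) • C (n + 1)) (F z)) ∧
      (∀ n : ℕ, 1 ≤ n →
        IntegrableOn (coeffIntegrand A (I.toOp B) n) (Icc a b) τ ∧
        I.toOp (C n) = coeffC τ a b A (I.toOp B) n ∧
        C n = ((n.factorial : ℂ)⁻¹) • iteratedDeriv n F 0 ∧
        ‖I.toOp (C n)‖ ≤
          mConst a b A ^ (n + 1) * ‖I.toOp B‖ ^ n * ∫ t in Icc a b, |t| ∂τ ∧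
        ‖C n‖ ≤
          mConst a b A ^ (n + 1) * ‖I.toOp B‖ ^ (n - 1) * ‖B‖ * ∫ t in Icc a b, |t| ∂τ) ∧
      AnalyticOnNhd ℂ F (Metric.ball (0 : ℂ) (deltaConst a b A / ‖I.toOp B‖)) :=
  fOp_analytic_in_parameter_general I hab.le τ hA hB
end
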